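/- arXiv:hep-th/9909002 — 12 statements merged into one kernel-verified Lean document; each statement's English description precedes it below -/
import Mathlib

section
/- Let R be an associative ring (with unit) containing elements a and a* satisfying a^3 = 0, (a*)^3 = 0, and a·a* + (a*)^2·a^2 = 1. Then a*·a^2 + a^2·a* = a. (After the rescaling b = √2·a this is the p = 2 parafermionic relation b†·b^2 + b^2·b† = 2b.) -/
/-! Write `b` for `a*`. Multiplying `a b + b ^ 2 a ^ 2 = 1` on the left by `a` gives
`a ^ 2 b + a b ^ 2 a ^ 2 = a`, so it suffices that `a b ^ 2 a ^ 2 = b a ^ 2`. Since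
`a b = 1 - b ^ 2 a ^ 2`, the difference of these is `b ^ 2 a (a b a) a`, which vanishes because
`a b a = a` and `a ^ 3 = 0`. -/

/-- For elements `a, a*` of an associative unital ring satisfying the `p = 2`
Chaichian–Demichev polynomial oscillator relations `a^3 = 0`, `(a*)^3 = 0`,
`a·a* + (a*)^2·a^2 = 1`, one has `a*·a^2 + a^2·a* = a`. -/
theorem stmt_1 (R : Type*) [Ring R] (a astar : R)
    (h1 : a ^ 3 = 0) (h2 : astar ^ 3 = 0)
    (h3 : a * astar + astar ^ 2 * a ^ 2 = 1) :
    astar * a ^ 2 + a ^ 2 * astar = a := by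
  -- Multiplying the third relation by `a` on the right gives `a a* a = a`, since `a ^ 3 = 0`.
  have haba : a * astar * a = a := by
    calc a * astar * a
        = (a * astar + astar ^ 2 * a ^ 2) * a - astar ^ 2 * a ^ 3 := by noncomm_ring
      _ = a := by rw [h3, h1]; simp
  -- Multiplying it by `a* a ^ 2` on the right, the extra term is
  -- `a* ^ 2 a (a a* a) a = a* ^ 2 a ^ 3 = 0`.
  have hmid : a * astar ^ 2 * a ^ 2 = astar * a ^ 2 := by
    calc a * astar ^ 2 * a ^ 2
        = (a * astar + astar ^ 2 * a ^ 2) * (astar * a ^ 2)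
          - astar ^ 2 * a * (a * astar * a) * a := by noncomm_ring
      _ = astar * a ^ 2 - astar ^ 2 * a ^ 3 := by rw [h3, haba]; noncomm_ring
      _ = astar * a ^ 2 := by rw [h1]; simp
  -- The claim is the third relation multiplied by `a` on the left.
  calc astar * a ^ 2 + a ^ 2 * astar
      = a * astar ^ 2 * a ^ 2 + a ^ 2 * astar := by rw [hmid]
    _ = a * (a * astar + astar ^ 2 * a ^ 2) := by noncomm_ring
    _ = a := by rw [h3, mul_one]
end

section
/- Let R be an associative ring (with unit) containing elements a and a* satisfying a^3 = 0, (a*)^3 = 0, and a·a* + (a*)^2·a^2 = 1, and define the number operator N := a*·a + (a*)^2·a^2. Then N·a* − a*·N = a* and N·a − a·N = −a. -/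
/-!
Multiplying `a a* + a*² a² = 1` by `a*` on the left and by `a` on the right gives `a* a a* = a*`
and `a a* a = a`. Since `N = 1 - [a, a*]`, the two commutation relations reduce to
`a a*² + a*² a = a*` and `a* a² + a² a* = a`, which follow by multiplying the same relation
by `a*` on the right and by `a` on the left, because `a*² a² a* = a*² a` and `a a*² a² = a* a²`;
each of these two comes from expanding `a a*` once more and using nilpotency.
-/

/-- For elements `a, a*` of an associative unital ring satisfying the `p = 2`
Chaichian–Demichev relations, the number operator `N = a*·a + (a*)^2·a^2`
satisfies `[N, a*] = a*` and `[N, a] = -a`. -/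
theorem stmt_2 (R : Type*) [Ring R] (a astar : R)
    (h1 : a ^ 3 = 0) (h2 : astar ^ 3 = 0)
    (h3 : a * astar + astar ^ 2 * a ^ 2 = 1)
    (N : R) (hN : N = astar * a + astar ^ 2 * a ^ 2) :
    N * astar - astar * N = astar ∧ N * a - a * N = -a := by
  have hN' : N = 1 - a * astar + astar * a := by rw [hN, ← h3]; abel
  have hab : a * astar = 1 - astar ^ 2 * a ^ 2 := eq_sub_of_add_eq h3
  have bab : astar * a * astar = astar := by
    calc astar * a * astar = astar * (a * astar) := by noncomm_ring
      _ = astar - astar ^ 3 * a ^ 2 := by rw [hab]; noncomm_ring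
      _ = astar := by rw [h2]; simp
  have aba : a * astar * a = a := by
    calc a * astar * a = a - astar ^ 2 * a ^ 3 := by rw [hab]; noncomm_ring
      _ = a := by rw [h1]; simp
  have abb : a * astar ^ 2 = astar - astar ^ 2 * a ^ 2 * astar := by
    calc a * astar ^ 2 = (a * astar) * astar := by noncomm_ring
      _ = _ := by rw [hab]; noncomm_ring
  have aab : a ^ 2 * astar = a - a * astar ^ 2 * a ^ 2 := by
    calc a ^ 2 * astar = a * (a * astar) := by noncomm_ring
      _ = _ := by rw [hab]; noncomm_ring
  have hb : astar ^ 2 * a ^ 2 * astar = astar ^ 2 * a := by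
    calc astar ^ 2 * a ^ 2 * astar = astar ^ 2 * (a ^ 2 * astar) := by noncomm_ring
      _ = astar ^ 2 * a - astar * (astar * a * astar) * astar * a ^ 2 := by
        rw [aab]; noncomm_ring
      _ = astar ^ 2 * a - astar ^ 3 * a ^ 2 := by rw [bab]; noncomm_ring
      _ = astar ^ 2 * a := by rw [h2]; simp
  have ha : a * astar ^ 2 * a ^ 2 = astar * a ^ 2 := by
    calc a * astar ^ 2 * a ^ 2
        = astar * a ^ 2 - astar ^ 2 * a * (a * astar * a) * a := by
          rw [abb]; noncomm_ring
      _ = astar * a ^ 2 - astar ^ 2 * a ^ 3 := by rw [aba]; noncomm_ring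
      _ = astar * a ^ 2 := by rw [h1]; simp
  rw [hb] at abb
  rw [ha] at aab
  constructor
  · calc N * astar - astar * N
        = astar * a * astar + astar * a * astar - a * astar ^ 2 - astar ^ 2 * a := by
          rw [hN']; noncomm_ring
      _ = astar := by rw [bab, abb]; abel
  · calc N * a - a * N
        = astar * a ^ 2 + a ^ 2 * astar - a * astar * a - a * astar * a := by
          rw [hN']; noncomm_ring
      _ = -a := by rw [aba, aab]; abel
end

section
/- Let R be an associative ring (with unit) containing elements a and a* satisfying a^3 = 0, (a*)^3 = 0, and a·a* + (a*)^2·a^2 = 1, and define N := a*·a + (a*)^2·a^2. Then N·(N − 1)·(N − 2) = 0, where 1 and 2 denote the corresponding multiples of the unit of R. -/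
/-- For elements `a, a*` of an associative unital ring satisfying the `p = 2`
Chaichian–Demichev relations, the number operator `N = a*·a + (a*)^2·a^2`
satisfies the Cayley identity `N(N-1)(N-2) = 0`. -/
theorem stmt_3 (R : Type*) [Ring R] (a astar : R)
    (h1 : a ^ 3 = 0) (h2 : astar ^ 3 = 0)
    (h3 : a * astar + astar ^ 2 * a ^ 2 = 1)
    (N : R) (hN : N = astar * a + astar ^ 2 * a ^ 2) :
    N * (N - 1) * (N - 2) = 0 := by
  -- `Q = a* a` and `P = (a*)² a²` are idempotents with `QP = PQ = P`. Hence `N = Q + P`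
  -- satisfies `N(N - 1) = 2P`, and `P(N - 2) = P + P - 2P = 0`.
  have hab : a * astar = 1 - astar ^ 2 * a ^ 2 := eq_sub_of_add_eq h3
  have hQQ : (astar * a) * (astar * a) = astar * a := by
    calc _ = astar * (a * astar) * a := by noncomm_ring
      _ = astar * a - astar ^ 3 * a ^ 3 := by rw [hab]; noncomm_ring
      _ = _ := by rw [h1]; simp
  have hPQ : (astar ^ 2 * a ^ 2) * (astar * a) = astar ^ 2 * a ^ 2 := by
    calc _ = astar ^ 2 * a * (a * astar) * a := by noncomm_ring
      _ = astar ^ 2 * a ^ 2 - astar ^ 2 * a * astar ^ 2 * a ^ 3 := by rw [hab]; noncomm_ring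
      _ = _ := by rw [h1]; simp
  have hQP : (astar * a) * (astar ^ 2 * a ^ 2) = astar ^ 2 * a ^ 2 := by
    calc _ = astar * (a * astar) * astar * a ^ 2 := by noncomm_ring
      _ = astar ^ 2 * a ^ 2 - astar ^ 3 * a ^ 2 * astar * a ^ 2 := by rw [hab]; noncomm_ring
      _ = _ := by rw [h2]; simp
  have hPP : (astar ^ 2 * a ^ 2) * (astar ^ 2 * a ^ 2) = astar ^ 2 * a ^ 2 := by
    -- Left multiplication of the third relation by `a²` gives `a² (a*)² a² = a²`.
    have h : a ^ 2 * (astar ^ 2 * a ^ 2) = a ^ 2 := by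
      calc _ = a ^ 2 * (a * astar + astar ^ 2 * a ^ 2) - a ^ 3 * astar := by noncomm_ring
        _ = _ := by rw [h3, h1]; simp
    rw [mul_assoc, h]
  subst hN
  generalize astar ^ 2 * a ^ 2 = P at *
  generalize astar * a = Q at *
  have hN1 : (Q + P) * (Q + P - 1) = 2 * P := by
    calc _ = Q * Q + Q * P + P * Q + P * P - Q - P := by noncomm_ring
      _ = _ := by rw [hQQ, hQP, hPQ, hPP]; noncomm_ring
  calc _ = 2 * (P * Q + P * P - 2 * P) := by rw [hN1]; noncomm_ring
    _ = 0 := by rw [hPQ, hPP]; noncomm_ring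
end

section
/- Let R be an associative ring (with unit) containing elements a and a* satisfying a^3 = 0, (a*)^3 = 0, and a·a* + (a*)^2·a^2 = 1, and define N := a*·a + (a*)^2·a^2. Then 2·a*·a = N·(3 − N) and 2·a·a* = (N + 1)·(2 − N). (In parafermionic variables b = √2·a these are the dual relations b†b = M(3 − M) and b b† = (M+1)(2 − M) of the order p = 2 parafermionic algebra.) -/
/-! Write `P = a*·a` and `Q = (a*)²·a²`. Substituting `a·a* = 1 - (a*)²·a²` wherever `a` stands
directly left of `a*`, the nilpotency relations kill the correction terms, so that `P` and `Q` are
idempotents with `PQ = QP = Q`. Hence `N = P + Q` satisfies `N² = P + 3Q`, and both relations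
follow from this together with `a·a* = 1 - Q`. -/

/-- For elements `a, a*` of an associative unital ring satisfying the `p = 2`
Chaichian–Demichev relations, with `N = a*·a + (a*)^2·a^2`, the dual relations
`2·a*·a = N(3 - N)` and `2·a·a* = (N+1)(2 - N)` hold. -/
theorem stmt_4 (R : Type*) [Ring R] (a astar : R)
    (h1 : a ^ 3 = 0) (h2 : astar ^ 3 = 0)
    (h3 : a * astar + astar ^ 2 * a ^ 2 = 1)
    (N : R) (hN : N = astar * a + astar ^ 2 * a ^ 2) :
    2 * (astar * a) = N * (3 - N) ∧ 2 * (a * astar) = (N + 1) * (2 - N) := by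
  have h4 : a * astar = 1 - astar ^ 2 * a ^ 2 := eq_sub_of_add_eq h3
  have hPP : astar * a * (astar * a) = astar * a := by
    calc astar * a * (astar * a) = astar * (a * astar) * a := by noncomm_ring
      _ = astar * a - astar ^ 3 * a ^ 3 := by rw [h4]; noncomm_ring
      _ = astar * a := by rw [h2]; simp
  have hPQ : astar * a * (astar ^ 2 * a ^ 2) = astar ^ 2 * a ^ 2 := by
    calc astar * a * (astar ^ 2 * a ^ 2) = astar * (a * astar) * astar * a ^ 2 := by noncomm_ring
      _ = astar ^ 2 * a ^ 2 - astar ^ 3 * a ^ 2 * astar * a ^ 2 := by rw [h4]; noncomm_ring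
      _ = astar ^ 2 * a ^ 2 := by rw [h2]; simp
  have hQP : astar ^ 2 * a ^ 2 * (astar * a) = astar ^ 2 * a ^ 2 := by
    calc astar ^ 2 * a ^ 2 * (astar * a) = astar ^ 2 * a * (a * astar) * a := by noncomm_ring
      _ = astar ^ 2 * a ^ 2 - astar ^ 2 * a * astar ^ 2 * a ^ 3 := by rw [h4]; noncomm_ring
      _ = astar ^ 2 * a ^ 2 := by rw [h1]; simp
  have hQQ : astar ^ 2 * a ^ 2 * (astar ^ 2 * a ^ 2) = astar ^ 2 * a ^ 2 := by
    -- Both `a` in `a²·(a*)²` are moved past an `a*`, the inner one first.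
    calc astar ^ 2 * a ^ 2 * (astar ^ 2 * a ^ 2)
        = astar ^ 2 * a * (a * astar) * astar * a ^ 2 := by noncomm_ring
      _ = astar ^ 2 * (a * astar) * a ^ 2
          - astar ^ 2 * (a * astar) * astar * a ^ 2 * astar * a ^ 2 := by
        conv_lhs => rw [h4]
        noncomm_ring
      _ = astar ^ 2 * a ^ 2 - astar ^ 3 * (astar * a ^ 4 + a ^ 2 * astar * a ^ 2
          - astar * a ^ 2 * astar * a ^ 2 * astar * a ^ 2) := by rw [h4]; noncomm_ring
      _ = astar ^ 2 * a ^ 2 := by rw [h2]; simp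
  have hNN : N * N = astar * a + 3 * (astar ^ 2 * a ^ 2) := by
    rw [hN, add_mul, mul_add, mul_add, hPP, hPQ, hQP, hQQ]
    noncomm_ring
  constructor
  · calc 2 * (astar * a) = 3 * N - N * N := by rw [hNN, hN]; noncomm_ring
      _ = N * (3 - N) := by noncomm_ring
  · calc 2 * (a * astar) = 2 + N - N * N := by rw [hNN, hN, h4]; grind
      _ = (N + 1) * (2 - N) := by grind
end

section
/- Let R be an associative algebra (with unit) over ℚ containing elements a and a* satisfying a^4 = 0, (a*)^4 = 0, and a·a* = 1 + (1/3)·a*·a − (1/3)·(a*)^2·a^2 − (2/3)·(a*)^3·a^3, and define the number operator N := a*·a + (1/2)·(a*)^2·a^2 + (a*)^3·a^3. Then N·a* − a*·N = a* and N·a − a·N = −a. -/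
/-!
Write `b` for `a*`. The relation expresses `a * b` through the normally ordered products `b ^ i * a ^ i`,
but pushing `a` past a `b` also creates higher terms, so normal ordering is not obviously finite.
It becomes finite behind a left factor `b ^ k`: rewriting the product `a * b` in `b ^ k * a * b` gives
terms with at least `k` factors `b` in front, with more of them in every term still containing `a`,
and `b ^ 4 = 0`. Starting from `k = 3` and descending, one finds
`b³ab = b³`, `b³a²b = (4/3) b³a`, `b³a³b = b³a²`, `b²ab = b² + (1/3) b³a`,
`b²a²b = (4/3) b²a - (1/3) b³a²` and `bab = b + (1/3) b²a - (1/3) b³a²`.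
Combining these gives `N * b = b + b²a + (1/2) b³a² = b + b * N` (`CD.number_mul`).
The relation and `N` are invariant under the anti-automorphism exchanging `a` and `b`, so the same
identity in the opposite algebra is the one for `a`.
-/

/-- The commutation relation `[N, b] = b`, stated for a general pair `a`, `b` so that it also
applies to `op b`, `op a` in the opposite algebra, where it reads `[N, a] = -a`. -/
theorem CD.number_mul {R : Type*} [Ring R] [Algebra ℚ R] (a b : R) (hb : b ^ 4 = 0)
    (hab : a * b = 1 + (1/3 : ℚ) • (b * a) - (1/3 : ℚ) • (b ^ 2 * a ^ 2)
      - (2/3 : ℚ) • (b ^ 3 * a ^ 3)) :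
    (b * a + (1/2 : ℚ) • (b ^ 2 * a ^ 2) + b ^ 3 * a ^ 3) * b
      = b + b * (b * a + (1/2 : ℚ) • (b ^ 2 * a ^ 2) + b ^ 3 * a ^ 3) := by
  -- Words are kept right-associated, and a word identity `w = v` is paired with its
  -- right-multiplied form `w * x = v * x`, so that `simp only` finds `w` inside longer words.
  have z : b * (b * (b * b)) = 0 := by
    simpa only [pow_succ, pow_zero, one_mul, mul_assoc] using hb
  have z' (x : R) : b * (b * (b * (b * x))) = 0 := by
    simpa only [mul_assoc, zero_mul] using congrArg (· * x) z
  simp only [pow_succ, pow_zero, one_mul, mul_assoc] at hab ⊢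
  have e₁ : b * (b * (b * (a * b))) = b * (b * b) := by
    rw [hab]
    simp only [mul_add, mul_sub, mul_smul_comm, mul_one, mul_zero, smul_zero, z']
    module
  have e₁' (x : R) : b * (b * (b * (a * (b * x))))
      = b * (b * (b * x)) := by
    simpa only [mul_assoc, add_mul, smul_mul_assoc] using congrArg (· * x) e₁
  have e₂ : b * (b * (b * (a * (a * b)))) = (4/3 : ℚ) • (b * (b * (b * a))) := by
    rw [hab]
    simp only [mul_add, mul_sub, mul_smul_comm, mul_one, mul_zero, smul_zero, z', e₁']
    module
  have e₂' (x : R) : b * (b * (b * (a * (a * (b * x)))))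
      = (4/3 : ℚ) • (b * (b * (b * (a * x)))) := by
    simpa only [mul_assoc, add_mul, smul_mul_assoc] using congrArg (· * x) e₂
  have e₃ : b * (b * (b * (a * (a * (a * b))))) = b * (b * (b * (a * a))) := by
    rw [hab]
    simp only [mul_add, mul_sub, mul_smul_comm, mul_one, smul_zero, z', e₁', e₂']
    module
  have f₁ : b * (b * (a * b)) = b * b + (1/3 : ℚ) • (b * (b * (b * a))) := by
    rw [hab]
    simp only [mul_add, mul_sub, mul_smul_comm, mul_one, mul_zero, smul_zero, z']
    module
  have f₁' (x : R) : b * (b * (a * (b * x)))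
      = b * (b * x) + (1/3 : ℚ) • (b * (b * (b * (a * x)))) := by
    simpa only [mul_assoc, add_mul, smul_mul_assoc] using congrArg (· * x) f₁
  have f₂ : b * (b * (a * (a * b))) = (4/3 : ℚ) • (b * (b * a))
      + (-1/3 : ℚ) • (b * (b * (b * (a * a)))) := by
    rw [hab]
    simp only [mul_add, mul_sub, mul_smul_comm, mul_one, mul_zero, smul_zero, smul_add, z', f₁']
    module
  have g₁ : b * (a * b) = b + (1/3 : ℚ) • (b * (b * a))
      + (-1/3 : ℚ) • (b * (b * (b * (a * a)))) := by
    rw [hab]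
    simp only [mul_add, mul_sub, mul_smul_comm, mul_one, smul_zero, z']
    module
  simp only [add_mul, smul_mul_assoc, mul_assoc, mul_add, mul_smul_comm, g₁, f₂, e₃, z']
  module

/-- For elements `a, a*` of an associative unital `ℚ`-algebra satisfying the `p = 3`
Chaichian–Demichev relations, the number operator
`N = a*·a + (1/2)(a*)^2·a^2 + (a*)^3·a^3` satisfies `[N, a*] = a*` and `[N, a] = -a`. -/
theorem stmt_5 (R : Type*) [Ring R] [Algebra ℚ R] (a astar : R)
    (h1 : a ^ 4 = 0) (h2 : astar ^ 4 = 0)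
    (h3 : a * astar = 1 + (1/3 : ℚ) • (astar * a) - (1/3 : ℚ) • (astar ^ 2 * a ^ 2)
            - (2/3 : ℚ) • (astar ^ 3 * a ^ 3))
    (N : R) (hN : N = astar * a + (1/2 : ℚ) • (astar ^ 2 * a ^ 2) + astar ^ 3 * a ^ 3) :
    N * astar - astar * N = astar ∧ N * a - a * N = -a := by
  subst hN
  constructor
  · rw [CD.number_mul a astar h2 h3, add_sub_cancel_right]
  · have h := CD.number_mul (MulOpposite.op astar) (MulOpposite.op a)
      (by rw [← MulOpposite.op_pow, h1, MulOpposite.op_zero])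
      (by simpa using congrArg MulOpposite.op h3)
    -- `op` reverses products, so `h'` reads `a * N = a + N * a`.
    have h' := congrArg MulOpposite.unop h
    simp only [MulOpposite.unop_mul, MulOpposite.unop_add, MulOpposite.unop_smul,
      MulOpposite.unop_pow, MulOpposite.unop_op] at h'
    rw [h']
    abel
end

section
/- Let R be an associative algebra (with unit) over ℚ containing elements a and a* satisfying a^4 = 0, (a*)^4 = 0, and a·a* = 1 + (1/3)·a*·a − (1/3)·(a*)^2·a^2 − (2/3)·(a*)^3·a^3, and define N := a*·a + (1/2)·(a*)^2·a^2 + (a*)^3·a^3. Then 3·a*·a = N·(4 − N) and 3·a·a* = (N + 1)·(3 − N). (In parafermionic variables b = √3·a these are the dual relations b†b = M(4 − M) and b b† = (M+1)(3 − M) of the order p = 3 parafermionic algebra.) -/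
/-!
The relation for `a a*` lets every word be normal ordered, and normal ordering terminates because
`(a*)^4 = 0`: when `a a*` is expanded inside `(a*)^i a^j a*`, each non-constant term carries at least
one more `a*` to the left. This gives closed formulas for `(a*)^i a^j a*` with `1 ≤ j ≤ i ≤ 3`.
They suffice to write every product of
the diagonal elements `(a*)^k a^k` as a linear combination of these elements, so that `N ^ 2`
becomes such a combination and both identities reduce to comparing coefficients.
-/

/-- For elements `a, a*` of an associative unital `ℚ`-algebra satisfying the `p = 3`
Chaichian–Demichev relations, with `N = a*·a + (1/2)(a*)^2·a^2 + (a*)^3·a^3`,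
the dual relations `3·a*·a = N(4 - N)` and `3·a·a* = (N+1)(3 - N)` hold. -/
theorem stmt_6 (R : Type*) [Ring R] [Algebra ℚ R] (a astar : R)
    (h1 : a ^ 4 = 0) (h2 : astar ^ 4 = 0)
    (h3 : a * astar = 1 + (1/3 : ℚ) • (astar * a) - (1/3 : ℚ) • (astar ^ 2 * a ^ 2)
            - (2/3 : ℚ) • (astar ^ 3 * a ^ 3))
    (N : R) (hN : N = astar * a + (1/2 : ℚ) • (astar ^ 2 * a ^ 2) + astar ^ 3 * a ^ 3) :
    3 * (astar * a) = N * (4 - N) ∧ 3 * (a * astar) = (N + 1) * (3 - N) := by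
  generalize astar = y at *
  -- Words are kept left associated, so each rule below rewrites only at the start of a word.
  have y4 : y * y * y * y = 0 := by rw [← h2]; noncomm_ring
  have key (z : R) : z * a * y = z + (1/3 : ℚ) • (z * y * a) - (1/3 : ℚ) • (z * y * y * a * a)
      - (2/3 : ℚ) • (z * y * y * y * a * a * a) := by
    rw [mul_assoc, h3]
    simp only [mul_sub, mul_add, mul_smul_comm, mul_one, pow_succ, pow_zero, one_mul, ← mul_assoc]
  have e31 : y * y * y * a * y = y * y * y := by
    rw [key]; simp only [y4, zero_mul]; module
  have e21 : y * y * a * y = y * y + (1/3 : ℚ) • (y * y * y * a) := by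
    rw [key]; simp only [y4, zero_mul]; module
  have e11 : y * a * y = y + (1/3 : ℚ) • (y * y * a) - (1/3 : ℚ) • (y * y * y * a * a) := by
    rw [key]; simp only [y4, zero_mul]; module
  have e32 : y * y * y * a * a * y = (4/3 : ℚ) • (y * y * y * a) := by
    rw [key]; simp only [e31, y4, zero_mul]; module
  have e22 : y * y * a * a * y = (4/3 : ℚ) • (y * y * a) - (1/3 : ℚ) • (y * y * y * a * a) := by
    rw [key]
    simp only [e21, e31, y4, zero_mul, add_mul, smul_mul_assoc]; module
  have e33 : y * y * y * a * a * a * y = y * y * y * a * a := by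
    rw [key]
    simp only [e32, e31, y4, zero_mul, smul_mul_assoc]; module
  have hq3 : (3 : R) = (3 : ℚ) • (1 : R) := by
    rw [← Algebra.algebraMap_eq_smul_one, map_ofNat]
  have hq4 : (4 : R) = (4 : ℚ) • (1 : R) := by
    rw [← Algebra.algebraMap_eq_smul_one, map_ofNat]
  have hNN : N * N = (4 : ℚ) • N - (3 : ℚ) • (y * a) := by
    rw [hN]
    simp only [pow_succ, pow_zero, one_mul, mul_add, add_mul, sub_mul, smul_mul_assoc,
      mul_smul_comm, ← mul_assoc, e11, e21, e31, e22, e32, e33]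
    module
  constructor
  · rw [mul_sub, hNN, hq3, hq4, smul_one_mul, mul_smul_comm, mul_one]
    module
  · have : (N + 1) * (3 - N) = (2 : ℚ) • N + (3 : ℚ) • 1 - N * N := by
      rw [hq3]
      simp only [mul_sub, add_mul, mul_smul_comm, mul_one, one_mul]
      module
    rw [this, hNN, h3, hN, hq3, smul_one_mul]
    module
end

section
/- Let R be an associative algebra (with unit) over ℚ containing elements a and a* satisfying a^4 = 0, (a*)^4 = 0, and a·a* = 1 + (1/3)·a*·a − (1/3)·(a*)^2·a^2 − (2/3)·(a*)^3·a^3, and define N := a*·a + (1/2)·(a*)^2·a^2 + (a*)^3·a^3. Then N·(N − 1)·(N − 2)·(N − 3) = 0. -/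
/-!
Write `b` for `astar` and `xₖ = bᵏ aᵏ`. Multiplying the relation for `a b` on the left by a power
of `b` makes it triangular because `b⁴ = 0`: first `b³ a b = b³`, then `b² a b = b² + b³ a / 3`,
and so on. This yields the normal forms of all products `xᵢ xⱼ`, and hence
`N x₁ = x₁ + x₂ + x₃ / 2`, `N x₂ = 2 x₂ + x₃`, `N x₃ = 3 x₃`. Since `N = x₁ + x₂ / 2 + x₃`, the
triangular action of `N` on the span of `x₁, x₂, x₃` gives `(N - 1) N = (3/2) x₂ + 3 x₃`, then
`(N - 2) (N - 1) N = (9/2) x₃`, and this is annihilated by `N - 3`.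
-/

theorem stmt_7 (R : Type*) [Ring R] [Algebra ℚ R] (a astar : R)
    (h1 : a ^ 4 = 0) (h2 : astar ^ 4 = 0)
    (h3 : a * astar = 1 + (1/3 : ℚ) • (astar * a) - (1/3 : ℚ) • (astar ^ 2 * a ^ 2)
            - (2/3 : ℚ) • (astar ^ 3 * a ^ 3))
    (N : R) (hN : N = astar * a + (1/2 : ℚ) • (astar ^ 2 * a ^ 2) + astar ^ 3 * a ^ 3) :
    N * (N - 1) * (N - 2) * (N - 3) = 0 := by
  generalize astar = b at *
  -- Products are kept right-associated with an arbitrary tail `y`, so that each identity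
  -- rewrites inside longer words.
  have B (y : R) : b * (b * (b * (b * y))) = 0 := by
    have h : b * (b * (b * (b * y))) = b ^ 4 * y := by noncomm_ring
    rw [h, h2, zero_mul]
  have F (y : R) : a * (b * y) = y + (1/3 : ℚ) • (b * (a * y))
      - (1/3 : ℚ) • (b * (b * (a * (a * y))))
      - (2/3 : ℚ) • (b * (b * (b * (a * (a * (a * y)))))) := by
    rw [← mul_assoc, h3]
    simp only [add_mul, sub_mul, smul_mul_assoc, one_mul, pow_succ, pow_zero, mul_assoc]
  have L31 (y : R) : b * (b * (b * (a * (b * y)))) = b * (b * (b * y)) := by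
    rw [F]
    simp only [mul_add, mul_sub, mul_smul_comm, B, smul_zero, add_zero, sub_zero]
  have L21 (y : R) : b * (b * (a * (b * y)))
      = b * (b * y) + (1/3 : ℚ) • (b * (b * (b * (a * y)))) := by
    rw [F]
    simp only [mul_add, mul_sub, mul_smul_comm, B, smul_zero, add_zero, sub_zero]
  have L11 (y : R) : b * (a * (b * y))
      = b * y + (1/3 : ℚ) • (b * (b * (a * y)))
        - (1/3 : ℚ) • (b * (b * (b * (a * (a * y))))) := by
    rw [F]
    simp only [mul_add, mul_sub, mul_smul_comm, B, smul_zero, add_zero, sub_zero]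
  have L32 (y : R) : b * (b * (b * (a * (a * (b * y)))))
      = (4/3 : ℚ) • (b * (b * (b * (a * y)))) := by
    rw [F]
    simp only [mul_add, mul_sub, mul_smul_comm, L31, B, smul_zero, mul_zero, sub_zero]
    module
  have L22 (y : R) : b * (b * (a * (a * (b * y))))
      = (4/3 : ℚ) • (b * (b * (a * y)))
        - (1/3 : ℚ) • (b * (b * (b * (a * (a * y))))) := by
    rw [F]
    simp only [mul_add, mul_sub, mul_smul_comm, L21, B, smul_zero, mul_zero]
    module
  have L33 (y : R) : b * (b * (b * (a * (a * (a * (b * y))))))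
      = b * (b * (b * (a * (a * y)))) := by
    rw [F]
    simp only [mul_add, mul_sub, mul_smul_comm, L32, L31, B, smul_zero, mul_zero]
    module
  obtain ⟨x1, hx1⟩ : ∃ x, x = b * a := ⟨_, rfl⟩
  obtain ⟨x2, hx2⟩ : ∃ x, x = b * (b * (a * a)) := ⟨_, rfl⟩
  obtain ⟨x3, hx3⟩ : ∃ x, x = b * (b * (b * (a * (a * a)))) := ⟨_, rfl⟩
  have hN' : N = x1 + (1/2 : ℚ) • x2 + x3 := by
    rw [hN, hx1, hx2, hx3]
    simp only [pow_succ, pow_zero, one_mul, mul_assoc]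
  have N1 : N * x1 = x1 + x2 + (1/2 : ℚ) • x3 := by
    rw [hN', hx1, hx2, hx3]
    simp only [add_mul, smul_mul_assoc, mul_assoc, L11, L22, L33]
    module
  have N2 : N * x2 = (2 : ℚ) • x2 + x3 := by
    rw [hN', hx1, hx2, hx3]
    simp only [add_mul, smul_mul_assoc, mul_assoc, L11, L22, L33,
      mul_add, mul_sub, mul_smul_comm, B, smul_zero, mul_zero]
    module
  have N3 : N * x3 = (3 : ℚ) • x3 := by
    rw [hN', hx1, hx2, hx3]
    simp only [add_mul, smul_mul_assoc, mul_assoc, L11, L22, L33,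
      mul_add, mul_sub, mul_smul_comm, B, smul_zero, mul_zero]
    module
  have c2 : N * N = x1 + (2 : ℚ) • x2 + (4 : ℚ) • x3 := by
    have h : N * N = N * (x1 + (1/2 : ℚ) • x2 + x3) := by rw [← hN']
    rw [h, mul_add, mul_add, mul_smul_comm, N1, N2, N3]
    module
  have e1 : N * N - N = (3/2 : ℚ) • x2 + (3 : ℚ) • x3 := by
    rw [c2, hN']
    module
  have e2 : N * (N * N - N) - (2 : ℚ) • (N * N - N) = (9/2 : ℚ) • x3 := by
    rw [e1, mul_add, mul_smul_comm, mul_smul_comm, N2, N3]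
    module
  have e3 : N * (N * (N * N - N) - (2 : ℚ) • (N * N - N))
      - (3 : ℚ) • (N * (N * N - N) - (2 : ℚ) • (N * N - N)) = 0 := by
    rw [e2, mul_smul_comm, N3]
    module
  rw [← e3, ofNat_smul_eq_nsmul ℚ 2, ofNat_smul_eq_nsmul ℚ 3]
  noncomm_ring
end

section
/- Let R be an associative ring (with unit), p a positive integer, and b, b†, M elements of R satisfying M·b − b·M = −b and b†·b = M·((p+1) − M). Then for every natural number k, (b†)^k · b^k = ∏_{ℓ=0}^{k−1} (M − ℓ)·((p+1) − M + ℓ), where the factors (which are pairwise commuting polynomials in M) are multiplied in order of increasing ℓ and integers denote the corresponding multiples of the unit of R. -/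
/-! The relation `[M, b] = -b` says `M b = b (M - 1)`, so moving `b ^ k` leftwards past a polynomial
`f(M)` turns it into `f(M - k)` (`mul_pow_shift`). Hence
`(b†)^(k+1) b^(k+1) = (b†)^k (b† b) b^k = (b†)^k f(M) b^k = (b†)^k b^k f(M - k)` with
`f(M) = M (p + 1 - M)`, which appends the factor `ℓ = k` on the right of the product. -/

theorem mul_pow_shift {R : Type*} [Ring R] {b M : R} (hMb : M * b - b * M = -b) (k : ℕ) :
    M * b ^ k = b ^ k * (M - (k : R)) := by
  have h1 : M * b = b * (M - 1) := by
    rw [sub_eq_iff_eq_add] at hMb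
    rw [hMb]; noncomm_ring
  induction k with
  | zero => simp
  | succ k ih =>
    calc M * b ^ (k + 1) = b ^ k * (M * b - k * b) := by
          rw [pow_succ, ← mul_assoc, ih, mul_assoc, sub_mul]
      _ = b ^ k * (b * (M - 1) - b * k) := by rw [h1, (Nat.cast_commute k b).eq]
      _ = b ^ (k + 1) * (M - ((k + 1 : ℕ) : R)) := by
          rw [← mul_sub, pow_succ, mul_assoc, Nat.cast_succ, sub_sub, add_comm (1 : R)]

/-- In an associative unital ring, if `[M, b] = -b` and `b†·b = M((p+1) - M)`
(parafermionic structure function of order `p`), then for every `k`,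
`(b†)^k b^k = ∏_{ℓ=0}^{k-1} (M - ℓ)((p+1) - M + ℓ)`, the factors being multiplied
in order of increasing `ℓ`. -/
theorem stmt_8 (R : Type*) [Ring R] (p : ℕ) (hp : 0 < p) (b bdag M : R)
    (hMb : M * b - b * M = -b)
    (hbb : bdag * b = M * (((p : R) + 1) - M)) :
    ∀ k : ℕ, bdag ^ k * b ^ k =
      ((List.range k).map (fun ℓ : ℕ => (M - (ℓ : R)) * (((p : R) + 1) - M + (ℓ : R)))).prod := by
  intro k
  induction k with
  | zero => simp
  | succ k ih =>
    have hM := mul_pow_shift hMb k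
    have hP : ((p : R) + 1 - M) * b ^ k = b ^ k * ((p : R) + 1 - M + k) := by
      have hc : ((p : R) + 1) * b ^ k = b ^ k * ((p : R) + 1) := by
        exact_mod_cast (Nat.cast_commute (p + 1) (b ^ k)).eq
      rw [sub_mul, hc, hM, ← mul_sub, sub_add]
    rw [List.range_succ, List.map_append, List.prod_append, ← ih]
    simp only [List.map_cons, List.map_nil, List.prod_cons, List.prod_nil, mul_one]
    calc bdag ^ (k + 1) * b ^ (k + 1) = bdag ^ k * ((bdag * b) * b ^ k) := by
          rw [pow_succ, pow_succ']; simp only [mul_assoc]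
      _ = bdag ^ k * (M * b ^ k * ((p : R) + 1 - M + k)) := by
          rw [hbb, mul_assoc M, hP, mul_assoc]
      _ = bdag ^ k * b ^ k * ((M - k) * ((p : R) + 1 - M + k)) := by
          rw [hM]; simp only [mul_assoc]
end

section
/- Let p be a positive integer. Then there exists a unique tuple of rational numbers (c_1, …, c_p) such that for every integer n with 1 ≤ n ≤ p, ∑_{k=1}^{n} (c_k / p^k) · (n!/(n−k)!) · ((p+k−n)!/(p−n)!) = n. -/
/-!
The system is square and lower triangular: row `n` only involves `c_1, …, c_n`, and the
coefficient of `c_n` in it is `n! · p! / (p^n · (p-n)!) ≠ 0`. The determinant of its matrix is the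
product of these diagonal entries, so the matrix is invertible and the solution exists and is
unique.
-/

/-- The matrix of the system. The 0-based indices `i`, `k` stand for the row `n = i + 1` and the
unknown `c_{k+1}`. -/
def coeffMatrix (p : ℕ) : Matrix (Fin p) (Fin p) ℚ := fun i k =>
  if (k : ℕ) + 1 ≤ (i : ℕ) + 1 then
    1 / (p : ℚ) ^ ((k : ℕ) + 1)
      * ((Nat.factorial (i + 1) : ℚ) / (Nat.factorial ((i + 1) - ((k : ℕ) + 1)) : ℚ))
      * ((Nat.factorial (p + ((k : ℕ) + 1) - (i + 1)) : ℚ) / (Nat.factorial (p - (i + 1)) : ℚ))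
  else 0

lemma isUnit_det_coeffMatrix (p : ℕ) (hp : 0 < p) : IsUnit (coeffMatrix p).det := by
  have hlow : (coeffMatrix p).IsLowerTriangular := by
    intro i k hik
    have h : (i : ℕ) < k := hik
    exact if_neg (by omega)
  rw [Matrix.det_of_isLowerTriangular _ hlow, isUnit_iff_ne_zero]
  refine Finset.prod_ne_zero_iff.mpr fun i _ => ?_
  have hp' : (p : ℚ) ≠ 0 := by exact_mod_cast hp.ne'
  simp only [coeffMatrix, le_refl, if_true]
  have hf : ∀ m : ℕ, (Nat.factorial m : ℚ) ≠ 0 := fun m => by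
    exact_mod_cast Nat.factorial_ne_zero m
  exact mul_ne_zero (mul_ne_zero (one_div_ne_zero (pow_ne_zero _ hp'))
    (div_ne_zero (hf _) (hf _))) (div_ne_zero (hf _) (hf _))


/-- For every positive integer `p` there is a unique tuple `(c_1, …, c_p)` of
rationals (here `c k` encodes `c_{k+1}`) satisfying the linear system
`ρ(n) = n` for `n = 1, …, p`, where
`ρ(n) = ∑_{k=1}^{n} (c_k/p^k)·(n!/(n-k)!)·((p+k-n)!/(p-n)!)`. -/
theorem stmt_11 (p : ℕ) (hp : 0 < p) :
    ∃! c : Fin p → ℚ, ∀ n : ℕ, 1 ≤ n → n ≤ p →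
      (∑ k : Fin p, if (k : ℕ) + 1 ≤ n then
          c k / (p : ℚ) ^ ((k : ℕ) + 1)
            * ((Nat.factorial n : ℚ) / (Nat.factorial (n - ((k : ℕ) + 1)) : ℚ))
            * ((Nat.factorial (p + ((k : ℕ) + 1) - n) : ℚ) / (Nat.factorial (p - n) : ℚ))
        else 0) = (n : ℚ) := by
  have hsys : ∀ c : Fin p → ℚ, (∀ n : ℕ, 1 ≤ n → n ≤ p →
      (∑ k : Fin p, if (k : ℕ) + 1 ≤ n then
          c k / (p : ℚ) ^ ((k : ℕ) + 1)
            * ((Nat.factorial n : ℚ) / (Nat.factorial (n - ((k : ℕ) + 1)) : ℚ))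
            * ((Nat.factorial (p + ((k : ℕ) + 1) - n) : ℚ) / (Nat.factorial (p - n) : ℚ))
        else 0) = (n : ℚ)) ↔
      (coeffMatrix p).mulVec c = fun i : Fin p => (((i : ℕ) + 1 : ℕ) : ℚ) := by
    intro c
    have hrow : ∀ i : Fin p, (coeffMatrix p).mulVec c i =
        ∑ k : Fin p, if (k : ℕ) + 1 ≤ (i : ℕ) + 1 then
          c k / (p : ℚ) ^ ((k : ℕ) + 1)
            * ((Nat.factorial (i + 1) : ℚ) / (Nat.factorial ((i + 1) - ((k : ℕ) + 1)) : ℚ))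
            * ((Nat.factorial (p + ((k : ℕ) + 1) - (i + 1)) : ℚ)
              / (Nat.factorial (p - (i + 1)) : ℚ))
        else 0 := by
      intro i
      simp only [Matrix.mulVec, dotProduct]
      refine Finset.sum_congr rfl fun k _ => ?_
      unfold coeffMatrix
      split_ifs <;> ring
    constructor
    · intro h
      funext i
      rw [hrow]
      exact h (i + 1) (by omega) i.isLt
    · intro h n hn hnp
      obtain ⟨m, rfl⟩ : ∃ m, n = m + 1 := ⟨n - 1, by omega⟩
      exact (hrow ⟨m, hnp⟩).symm.trans (congrFun h ⟨m, hnp⟩)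
  simp only [hsys]
  have hA : IsUnit (coeffMatrix p) :=
    (Matrix.isUnit_iff_isUnit_det _).mpr (isUnit_det_coeffMatrix p hp)
  have hbij : Function.Bijective (coeffMatrix p).mulVec :=
    ⟨Matrix.mulVec_injective_iff_isUnit.mpr hA, Matrix.mulVec_surjective_iff_isUnit.mpr hA⟩
  exact hbij.existsUnique _
end

section
/- Let p be a positive integer and let R be an associative unital ℚ-algebra containing elements b, b†, M satisfying M·b† − b†·M = b†, M·b − b·M = −b, b†·b = M·((p+1) − M), b·b† = (M+1)·(p − M), b^{p+1} = (b†)^{p+1} = 0, and M·(M−1)·(M−2)⋯(M−p) = 0. Let (c_1, …, c_p) be the unique rational numbers satisfying ∑_{k=1}^{n} (c_k/p^k)·(n!/(n−k)!)·((p+k−n)!/(p−n)!) = n for all 1 ≤ n ≤ p. Then M = ∑_{k=1}^{p} (c_k/p^k) · (b†)^k · b^k. -/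
/-!
Moving `bdag` past `M` shifts `M` by one, so `bdag ^ k * b ^ k` is the polynomial
`F_k(M)` with `F_k(x) = ∏_{j < k} (x - j) (p + 1 - x + j)` (`pow_mul_pow_eq_aeval`). On the
integers `n = 0, …, p` the values of `F_k` are the factorial quotients of the linear system
(`eval_ladderPoly`), so the system says that `∑ k, (c_k / p ^ k) F_k - X` vanishes at
`1, …, p`; it vanishes at `0` because every `F_k` with `k ≥ 1` does. This polynomial is
therefore a multiple of `X (X - 1) ⋯ (X - p)`, which annihilates `M` by the Cayley identity.
-/

open Polynomial

/-- The polynomial `∏_{j < k} (X - j) (p + 1 - X + j)`, written as a falling factorial of `X`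
times a rising factorial of `p + 1 - X`. -/
noncomputable def ladderPoly (p k : ℕ) : ℚ[X] :=
  descPochhammer ℚ k * (ascPochhammer ℚ k).comp (C ((p : ℚ) + 1) - X)

theorem ladderPoly_succ (p k : ℕ) :
    ladderPoly p (k + 1) =
      (ladderPoly p k).comp (X - 1) * (X * (C ((p : ℚ) + 1) - X)) := by
  have h : C ((p : ℚ) + 1) - X + 1 = C ((p : ℚ) + 1) - (X - 1) := by ring
  simp only [ladderPoly, descPochhammer_succ_left, ascPochhammer_succ_left, mul_comp, comp_assoc,
    add_comp, sub_comp, X_comp, C_comp, one_comp, h]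
  ring

/-- For `n < k` the falling factorial vanishes; otherwise both factors are factorial quotients. -/
theorem eval_ladderPoly {p n : ℕ} (hn : n ≤ p) (k : ℕ) :
    (ladderPoly p k).eval (n : ℚ) =
      if k ≤ n then ((n.factorial : ℚ) / ((n - k).factorial : ℚ))
        * (((p + k - n).factorial : ℚ) / ((p - n).factorial : ℚ)) else 0 := by
  have h1 : (p : ℚ) + 1 - n = ((p - n + 1 : ℕ) : ℚ) := by
    push_cast [Nat.cast_sub hn]; ring
  rw [ladderPoly, eval_mul, eval_comp, eval_sub, eval_C, eval_X, h1,
    descPochhammer_eval_eq_descFactorial, ← ascPochhammer_eval_cast,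
    ascPochhammer_nat_eq_ascFactorial]
  split_ifs with hk
  · have h2 := Nat.factorial_mul_descFactorial hk
    have h3 := Nat.factorial_mul_ascFactorial (p - n) k
    rw [show p - n + k = p + k - n by omega] at h3
    rw [← h2, ← h3]
    have := Nat.factorial_ne_zero (n - k)
    have := Nat.factorial_ne_zero (p - n)
    push_cast
    field_simp
  · rw [Nat.descFactorial_of_lt (not_le.mp hk), Nat.cast_zero, zero_mul]

theorem mul_aeval_eq_aeval_comp_mul {R : Type*} [Ring R] [Algebra ℚ R] {bdag M : R}
    (hMbd : M * bdag - bdag * M = bdag) (P : ℚ[X]) :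
    bdag * aeval M P = aeval M (P.comp (X - 1)) * bdag := by
  have h : SemiconjBy bdag M (M - 1) := by
    rw [SemiconjBy, sub_mul, one_mul, eq_sub_iff_add_eq, ← eq_sub_iff_add_eq', hMbd]
  rw [aeval_comp, map_sub, aeval_X, map_one]
  induction P using Polynomial.induction_on' with
  | add P Q hP hQ => rw [map_add, map_add, mul_add, add_mul, hP, hQ]
  | monomial n r =>
    rw [aeval_monomial, aeval_monomial, ← mul_assoc, ← Algebra.commutes r bdag, mul_assoc,
      (h.pow_right n).eq, mul_assoc]

/-- Induction on `k`, peeling off the outermost `bdag` and `b` and shifting `M` by one. -/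
theorem pow_mul_pow_eq_aeval {R : Type*} [Ring R] [Algebra ℚ R] {p : ℕ} {b bdag M : R}
    (hMbd : M * bdag - bdag * M = bdag)
    (hbdb : bdag * b = M * (((p : R) + 1) - M)) (k : ℕ) :
    bdag ^ k * b ^ k = aeval M (ladderPoly p k) := by
  induction k with
  | zero => simp [ladderPoly]
  | succ k ih =>
    rw [pow_succ' bdag, pow_succ b, mul_assoc, ← mul_assoc (bdag ^ k), ih, ← mul_assoc,
      mul_aeval_eq_aeval_comp_mul hMbd, mul_assoc, hbdb, ladderPoly_succ, map_mul]
    simp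

theorem prod_X_sub_C_natCast_dvd {m : ℕ} {Q : ℚ[X]}
    (hQ : ∀ n ∈ Finset.range m, Q.eval (n : ℚ) = 0) :
    (∏ k ∈ Finset.range m, (X - C (k : ℚ))) ∣ Q :=
  Finset.prod_dvd_of_coprime
    (fun _ _ _ _ hij => pairwise_coprime_X_sub_C (Nat.cast_injective (R := ℚ)) hij)
    fun n hn => dvd_iff_isRoot.mpr (hQ n hn)

/-- In the order-`p` parafermionic algebra (an associative unital `ℚ`-algebra with
ladder operators `b, b†` and number operator `M`), if `(c_1, …, c_p)` solves the
linear system `ρ(n) = n` for `n = 1, …, p` (here `c k` encodes `c_{k+1}`), then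
`M = ∑_{k=1}^{p} (c_k/p^k)·(b†)^k·b^k`. -/
theorem stmt_12 (p : ℕ) (hp : 0 < p)
    (R : Type*) [Ring R] [Algebra ℚ R] (b bdag M : R)
    (hMbd : M * bdag - bdag * M = bdag)
    (hMb : M * b - b * M = -b)
    (hbdb : bdag * b = M * (((p : R) + 1) - M))
    (hbbd : b * bdag = (M + 1) * ((p : R) - M))
    (hbnil : b ^ (p + 1) = 0) (hbdnil : bdag ^ (p + 1) = 0)
    (hCayley : ((List.range (p + 1)).map (fun k : ℕ => M - (k : R))).prod = 0)
    (c : Fin p → ℚ)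
    (hc : ∀ n : ℕ, 1 ≤ n → n ≤ p →
      (∑ k : Fin p, if (k : ℕ) + 1 ≤ n then
          c k / (p : ℚ) ^ ((k : ℕ) + 1)
            * ((Nat.factorial n : ℚ) / (Nat.factorial (n - ((k : ℕ) + 1)) : ℚ))
            * ((Nat.factorial (p + ((k : ℕ) + 1) - n) : ℚ) / (Nat.factorial (p - n) : ℚ))
        else 0) = (n : ℚ)) :
    M = ∑ k : Fin p,
      (c k / (p : ℚ) ^ ((k : ℕ) + 1)) • (bdag ^ ((k : ℕ) + 1) * b ^ ((k : ℕ) + 1)) := by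
  set a : Fin p → ℚ := fun k => c k / (p : ℚ) ^ ((k : ℕ) + 1) with ha
  let Q : ℚ[X] := ∑ k : Fin p, C (a k) * ladderPoly p ((k : ℕ) + 1) - X
  -- `Q` vanishes at every point `0, …, p` of the spectrum of `M`.
  have hQ : ∀ n ∈ Finset.range (p + 1), Q.eval (n : ℚ) = 0 := by
    intro n hn
    have hnp : n ≤ p := Nat.lt_succ_iff.mp (Finset.mem_range.mp hn)
    simp only [Q, eval_sub, eval_X, eval_finsetSum, eval_mul, eval_C, sub_eq_zero]
    rcases Nat.eq_zero_or_pos n with rfl | hpos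
    · rw [Nat.cast_zero]
      refine Finset.sum_eq_zero fun k _ => ?_
      simp [ladderPoly, descPochhammer_succ_left]
    · refine Eq.trans ?_ (hc n hpos hnp)
      refine Finset.sum_congr rfl fun k _ => ?_
      rw [eval_ladderPoly hnp]
      split_ifs with h
      · ring
      · simp
  obtain ⟨S, hS⟩ := prod_X_sub_C_natCast_dvd hQ
  have hzero : aeval M Q = 0 := by
    rw [hS, map_mul]
    have : aeval M (∏ k ∈ Finset.range (p + 1), (X - C (k : ℚ))) = 0 := by
      change aeval M ((List.range (p + 1)).map fun k : ℕ => (X - C (k : ℚ) : ℚ[X])).prod = 0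
      rw [map_list_prod, List.map_map, ← hCayley]
      congr 2
      funext k
      simp
    rw [this, zero_mul]
  simp only [Q, map_sub, map_sum, map_mul, aeval_X, aeval_C, sub_eq_zero] at hzero
  refine hzero.symm.trans ?_
  refine Finset.sum_congr rfl fun k _ => ?_
  rw [pow_mul_pow_eq_aeval hMbd hbdb, Algebra.smul_def]
end

section
/- Let p be a positive integer. For 0 ≤ k ≤ p set [k] := k(p+1−k) and [k]! := ∏_{ℓ=1}^{k} [ℓ] (with [0]! = 1), and define rational numbers d_0, d_1, …, d_p by d_0 = 1 and d_n = −∑_{k=0}^{n−1} d_k / [n−k]! for 1 ≤ n ≤ p. Then for every integer n with 0 ≤ n ≤ p, ∑_{k=0}^{p} d_k · (∏_{ℓ=0}^{k−1} [n−ℓ]) equals 1 if n = 0 and equals 0 if 1 ≤ n ≤ p. -/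
/-!
The factors `[n-ℓ]` with `ℓ ≥ n` contain `[0] = 0`, so only the terms `k ≤ n` survive. For those the
product of `k` factors descending from `[n]` is `[n]!/[n-k]!` (`prod_descending_mul_prod_Icc`), where
`[n-k]! ≠ 0` because `n ≤ p`. The sum is therefore `[n]! ∑_{k ≤ n} d_k/[n-k]!`, and for `n ≥ 1` the
recurrence, whose missing `k = n` term is `d_n/[0]! = d_n`, says that this vanishes.
-/

/-- Splitting a generalized factorial: `[n]⋯[n-k+1] · [n-k]! = [n]!`, for any function `s`
in place of the structure function. -/
lemma prod_descending_mul_prod_Icc (s : ℕ → ℚ) (n k : ℕ) (hk : k ≤ n) :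
    (∏ ℓ ∈ Finset.range k, s (n - ℓ)) * ∏ ℓ ∈ Finset.Icc 1 (n - k), s ℓ
      = ∏ ℓ ∈ Finset.Icc 1 n, s ℓ := by
  induction k with
  | zero => simp
  | succ k ih =>
    rw [← ih (by omega), Finset.prod_range_succ]
    have h : n - k = (n - (k + 1)) + 1 := by omega
    have h2 := Finset.prod_Icc_succ_top (a := 1) (b := n - (k + 1)) (by omega) s
    rw [← h] at h2
    rw [h2]
    ring

/-- For the order-`p` parafermionic structure function `[k] = k(p+1-k)` with
factorial `[k]! = ∏_{ℓ=1}^{k}[ℓ]`, the coefficients defined by `d_0 = 1` and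
`d_n = -∑_{k=0}^{n-1} d_k/[n-k]!` satisfy, for all `0 ≤ n ≤ p`,
`∑_{k=0}^{p} d_k·∏_{ℓ=0}^{k-1}[n-ℓ] = δ_{n,0}` (so `P_0` projects onto the
lowest-weight state). -/
theorem stmt_13 (p : ℕ) (hp : 0 < p) (d : ℕ → ℚ)
    (hd0 : d 0 = 1)
    (hdn : ∀ n : ℕ, 1 ≤ n → n ≤ p →
      d n = -∑ k ∈ Finset.range n,
        d k / ∏ ℓ ∈ Finset.Icc 1 (n - k), ((ℓ : ℚ) * ((p : ℚ) + 1 - (ℓ : ℚ)))) :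
    ∀ n : ℕ, n ≤ p →
      (∑ k ∈ Finset.range (p + 1),
        d k * ∏ ℓ ∈ Finset.range k,
          (((n - ℓ : ℕ) : ℚ) * ((p : ℚ) + 1 - ((n - ℓ : ℕ) : ℚ))))
        = if n = 0 then 1 else 0 := by
  intro n hn
  set s : ℕ → ℚ := fun m => (m : ℚ) * ((p : ℚ) + 1 - (m : ℚ)) with hs
  have hF : ∀ m ≤ p, (∏ ℓ ∈ Finset.Icc 1 m, s ℓ) ≠ 0 := by
    intro m hm
    refine Finset.prod_ne_zero_iff.2 fun ℓ hℓ => ?_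
    rw [Finset.mem_Icc] at hℓ
    have h1 : (1 : ℚ) ≤ ℓ := by exact_mod_cast hℓ.1
    have h2 : (ℓ : ℚ) ≤ p := by exact_mod_cast hℓ.2.trans hm
    exact mul_ne_zero (by linarith) (by linarith)
  change ∑ k ∈ Finset.range (p + 1), d k * ∏ ℓ ∈ Finset.range k, s (n - ℓ) = _
  have hcut : ∑ k ∈ Finset.range (p + 1), d k * ∏ ℓ ∈ Finset.range k, s (n - ℓ)
      = ∑ k ∈ Finset.range (n + 1), d k * ∏ ℓ ∈ Finset.range k, s (n - ℓ) := by
    symm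
    refine Finset.sum_subset (Finset.range_mono (by omega)) fun k _ hk => ?_
    rw [Finset.mem_range] at hk
    -- the factor at `ℓ = n` is `[0] = 0`
    rw [Finset.prod_eq_zero (i := n) (Finset.mem_range.2 (by omega)) (by simp [hs]), mul_zero]
  have hfac : ∑ k ∈ Finset.range (n + 1), d k * ∏ ℓ ∈ Finset.range k, s (n - ℓ)
      = (∏ ℓ ∈ Finset.Icc 1 n, s ℓ) *
        ∑ k ∈ Finset.range (n + 1), d k / ∏ ℓ ∈ Finset.Icc 1 (n - k), s ℓ := by
    rw [Finset.mul_sum]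
    refine Finset.sum_congr rfl fun k hk => ?_
    rw [Finset.mem_range] at hk
    have h0 := hF (n - k) (by omega)
    rw [← prod_descending_mul_prod_Icc s n k (by omega)]
    field_simp
  rw [hcut, hfac]
  split_ifs with h
  · subst h
    simp [hd0]
  · have hr := hdn n (by omega) hn
    change d n = -∑ k ∈ Finset.range n, d k / ∏ ℓ ∈ Finset.Icc 1 (n - k), s ℓ at hr
    rw [Finset.sum_range_succ, hr]
    simp
end

section
/- Let p be a positive integer. Set [k] := k(p+1−k), [k]! := ∏_{ℓ=1}^{k}[ℓ] (with [0]! = 1), define d_0 = 1 and d_n = −∑_{k=0}^{n−1} d_k/[n−k]! for 1 ≤ n ≤ p, and define c_n := p^n · ∑_{k=1}^{n} (k/[k]!) · d_{n−k} for 1 ≤ n ≤ p. Then the numbers c_1, …, c_p solve the system ρ(n) = n: for every integer n with 1 ≤ n ≤ p, ∑_{k=1}^{n} (c_k/p^k) · (n!/(n−k)!) · ((p+k−n)!/(p−n)!) = n. -/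
/-! With `[k]! = k! p! / (p-k)!` for `k ≤ p`, the weight `(n!/(n-k)!)·((p+k-n)!/(p-n)!)` equals
`[n]!/[n-k]!`. Put `E = ∑ X^k/[k]!`, `D = ∑ d_k X^k` and `A = ∑ (k/[k]!) X^k` in `ℚ⟦X⟧`. The
recurrence for `d` says that `D * E` agrees with `1` in degrees at most `p`, and
`c_k/p^k` is the `k`-th coefficient of `A * D`. Hence the sum in question is
`[n]!` times the `n`-th coefficient of `A * (D * E)`, that is `[n]! · (n/[n]!) = n`. -/

/-- The deformed factorial `[k]! = ∏_{ℓ=1}^{k} ℓ(p+1-ℓ)`; it vanishes for `k > p`. -/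
def bracketFactorial (p k : ℕ) : ℚ :=
  ∏ ℓ ∈ Finset.Icc 1 k, ((ℓ : ℚ) * ((p : ℚ) + 1 - (ℓ : ℚ)))

theorem bracketFactorial_mul_factorial (p k : ℕ) (hk : k ≤ p) :
    bracketFactorial p k * ((p - k).factorial : ℚ) = (k.factorial : ℚ) * (p.factorial : ℚ) := by
  induction k with
  | zero => simp [bracketFactorial]
  | succ k ih =>
    have ih := ih (by omega)
    obtain ⟨m, rfl⟩ : ∃ m, p = m + (k + 1) := ⟨p - (k + 1), by omega⟩
    have h1 : m + (k + 1) - k = m + 1 := by omega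
    rw [h1, Nat.factorial_succ m] at ih
    rw [Nat.add_sub_cancel, Nat.factorial_succ k]
    unfold bracketFactorial at ih ⊢
    rw [Finset.prod_Icc_succ_top (by omega)]
    push_cast at ih ⊢
    linear_combination ((k : ℚ) + 1) * ih

theorem bracketFactorial_ne_zero (p k : ℕ) (hk : k ≤ p) : bracketFactorial p k ≠ 0 := by
  intro h
  have h1 := bracketFactorial_mul_factorial p k hk
  rw [h, zero_mul] at h1
  exact mul_ne_zero (Nat.cast_ne_zero.2 k.factorial_ne_zero)
    (Nat.cast_ne_zero.2 p.factorial_ne_zero) h1.symm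

theorem factorial_weight_eq (p n k : ℕ) (hk : k ≤ n) (hn : n ≤ p) :
    ((Nat.factorial n : ℚ) / (Nat.factorial (n - k) : ℚ))
      * ((Nat.factorial (p + k - n) : ℚ) / (Nat.factorial (p - n) : ℚ))
      = bracketFactorial p n / bracketFactorial p (n - k) := by
  have h1 := bracketFactorial_mul_factorial p n hn
  have h2 := bracketFactorial_mul_factorial p (n - k) (by omega)
  rw [show p - (n - k) = p + k - n by omega] at h2
  have hb := bracketFactorial_ne_zero p (n - k) (by omega)
  have f (m : ℕ) : (m.factorial : ℚ) ≠ 0 := Nat.cast_ne_zero.2 m.factorial_ne_zero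
  have f1 := f (n - k)
  have f2 := f (p - n)
  rw [div_mul_div_comm, div_eq_div_iff (mul_ne_zero f1 f2) hb]
  apply mul_right_cancel₀ (f p)
  linear_combination (n.factorial : ℚ) * p.factorial * h2 
    - ((n - k).factorial : ℚ) * p.factorial * h1

/-- With `[k] = k(p+1-k)`, `[k]! = ∏_{ℓ=1}^{k}[ℓ]`, `d_0 = 1`,
`d_n = -∑_{k=0}^{n-1} d_k/[n-k]!`, the numbers
`c_n = p^n·∑_{k=1}^{n} (k/[k]!)·d_{n-k}` solve the linear system `ρ(n) = n`:
for all `1 ≤ n ≤ p`,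
`∑_{k=1}^{n} (c_k/p^k)·(n!/(n-k)!)·((p+k-n)!/(p-n)!) = n`. -/
theorem stmt_15 (p : ℕ) (hp : 0 < p) (d c : ℕ → ℚ)
    (hd0 : d 0 = 1)
    (hdn : ∀ n : ℕ, 1 ≤ n → n ≤ p →
      d n = -∑ k ∈ Finset.range n,
        d k / ∏ ℓ ∈ Finset.Icc 1 (n - k), ((ℓ : ℚ) * ((p : ℚ) + 1 - (ℓ : ℚ))))
    (hc : ∀ n : ℕ, 1 ≤ n → n ≤ p →
      c n = (p : ℚ) ^ n * ∑ k ∈ Finset.Icc 1 n,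
        ((k : ℚ) / ∏ ℓ ∈ Finset.Icc 1 k, ((ℓ : ℚ) * ((p : ℚ) + 1 - (ℓ : ℚ)))) * d (n - k)) :
    ∀ n : ℕ, 1 ≤ n → n ≤ p →
      (∑ k ∈ Finset.Icc 1 n,
        c k / (p : ℚ) ^ k
          * ((Nat.factorial n : ℚ) / (Nat.factorial (n - k) : ℚ))
          * ((Nat.factorial (p + k - n) : ℚ) / (Nat.factorial (p - n) : ℚ)))
        = (n : ℚ) := by
  intro n hn1 hnp
  let E : PowerSeries ℚ := PowerSeries.mk fun k => 1 / bracketFactorial p k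
  let D : PowerSeries ℚ := PowerSeries.mk d
  let A : PowerSeries ℚ := PowerSeries.mk fun k => (k : ℚ) / bracketFactorial p k
  -- `D * E` agrees with `1` up to degree `p`.
  have hDE : ∀ m, m ≤ p → PowerSeries.coeff m (D * E) = if m = 0 then 1 else 0 := by
    intro m hm
    rw [PowerSeries.coeff_mul, Finset.Nat.sum_antidiagonal_eq_sum_range_succ_mk,
      Finset.sum_range_succ]
    simp only [D, E, PowerSeries.coeff_mk, Nat.sub_self]
    rcases Nat.eq_zero_or_pos m with rfl | h
    · simp [hd0, bracketFactorial]
    · have h0 := hdn m h hm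
      rw [if_neg (by omega), h0]
      simp [bracketFactorial, div_eq_mul_inv]
  have hAD : ∀ k, 1 ≤ k → k ≤ p → c k / (p : ℚ) ^ k = PowerSeries.coeff k (A * D) := by
    intro k h1 hk
    have hp' : (p : ℚ) ^ k ≠ 0 := pow_ne_zero _ (Nat.cast_ne_zero.2 hp.ne')
    rw [hc k h1 hk, mul_div_cancel_left₀ _ hp', PowerSeries.coeff_mul,
      Finset.Nat.sum_antidiagonal_eq_sum_range_succ_mk, Finset.range_eq_Ico,
      Finset.sum_eq_sum_Ico_succ_bot (by omega)]
    simp only [A, D, PowerSeries.coeff_mk, Nat.cast_zero, zero_div, zero_mul, zero_add]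
    rfl
  have hADE : PowerSeries.coeff n (A * (D * E)) = (n : ℚ) / bracketFactorial p n := by
    rw [PowerSeries.coeff_mul, Finset.Nat.sum_antidiagonal_eq_sum_range_succ_mk,
      Finset.sum_range_succ, Finset.sum_eq_zero]
    · simp [hDE, A]
    · intro k hk
      have hk := Finset.mem_range.1 hk
      rw [hDE _ (by omega), if_neg (by omega), mul_zero]
  have hsum : PowerSeries.coeff n (A * D * E)
      = ∑ k ∈ Finset.Icc 1 n, PowerSeries.coeff k (A * D) * (1 / bracketFactorial p (n - k)) := by
    rw [PowerSeries.coeff_mul, Finset.Nat.sum_antidiagonal_eq_sum_range_succ_mk,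
      Finset.range_eq_Ico, Finset.sum_eq_sum_Ico_succ_bot (by omega)]
    have h0 : PowerSeries.coeff 0 (A * D) = 0 := by simp [PowerSeries.coeff_mul, A]
    simp only [h0, zero_mul, zero_add, E, PowerSeries.coeff_mk]
    rfl
  calc _ = bracketFactorial p n * PowerSeries.coeff n (A * D * E) := by
        rw [hsum, Finset.mul_sum]
        refine Finset.sum_congr rfl fun k hk => ?_
        obtain ⟨h1, h2⟩ := Finset.mem_Icc.1 hk
        rw [mul_assoc, factorial_weight_eq p n k h2 hnp, hAD k h1 (by omega)]
        ring
    _ = n := by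
        rw [mul_assoc, hADE, mul_div_cancel₀ _ (bracketFactorial_ne_zero p n hnp)]
end
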